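/- Let n ≥ 2 be even and let 0 ≤ θ_0 < θ_1 < ... < θ_{n-1} < 2π be real nodes. Define β_i(θ) = ((−1)^i cos((θ − θ_i)/2) Π_{k≠i} sin((θ − θ_k)/2)) / (Σ_{j=0}^{n-1} (−1)^j cos((θ − θ_j)/2) Π_{k≠j} sin((θ − θ_k)/2)) and the trigonometric Hermite basis b_{i,j}(θ) = (2^j/j!) sin^j((θ − θ_i)/2) · β_i(θ)^{j+1}. Then for all i, ℓ ∈ {0,...,n-1} and all j, k ∈ ℕ: the k-th iterated derivative of b_{i,j} at θ_ℓ equals 0 whenever k < j, and the j-th iterated derivative of b_{i,j} at θ_ℓ equals δ_{iℓ}. -/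

import Mathlib

open scoped BigOperators

/-- The pole-free form of Berrut's trigonometric basis function for even `n`. -/
noncomputable def berrutBasisEven (n : ℕ) (θ : Fin n → ℝ) (i : Fin n) (t : ℝ) : ℝ :=
  ((-1 : ℝ) ^ (i : ℕ) * Real.cos ((t - θ i) / 2) *
      ∏ k ∈ Finset.univ.erase i, Real.sin ((t - θ k) / 2)) /
    (∑ j : Fin n, (-1 : ℝ) ^ (j : ℕ) * Real.cos ((t - θ j) / 2) *
      ∏ k ∈ Finset.univ.erase j, Real.sin ((t - θ k) / 2))

/-- The trigonometric Hermite basis `b_{i,j}(θ) = (2^j/j!) sin^j((θ−θ_i)/2) β_i(θ)^(j+1)`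
for even `n`. -/
noncomputable def trigHermiteBasisEven (n : ℕ) (θ : Fin n → ℝ) (i : Fin n) (j : ℕ)
    (t : ℝ) : ℝ :=
  ((2 : ℝ) ^ j / (Nat.factorial j : ℝ)) * Real.sin ((t - θ i) / 2) ^ j *
    berrutBasisEven n θ i t ^ (j + 1)

theorem iterDeriv_pow_mul_aux (a : ℝ) (g : ℝ → ℝ) (hg : AnalyticAt ℝ g a) (hg0 : g a = 0) :
    ∀ (k j : ℕ) (h : ℝ → ℝ), AnalyticAt ℝ h a → k ≤ j →
      iteratedDeriv k (fun t => g t ^ j * h t) a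
        = if k = j then (Nat.factorial j : ℝ) * deriv g a ^ j * h a else 0 := by
  intro k
  induction k with
  | zero =>
    intro j h hh hk
    rcases j with _ | j
    · simp
    · simp [hg0]
  | succ k ih =>
    intro j h hh hk
    obtain ⟨m, rfl⟩ : ∃ m, j = m + 1 := ⟨j - 1, by omega⟩
    rw [iteratedDeriv_succ']
    have hev : deriv (fun t => g t ^ (m + 1) * h t) =ᶠ[nhds a]
        (fun t => g t ^ m * (((m : ℝ) + 1) * deriv g t * h t + g t * deriv h t)) := by
      filter_upwards [hg.eventually_analyticAt, hh.eventually_analyticAt] with t h1 h2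
      have e := ((h1.differentiableAt.hasDerivAt.pow (m + 1)).mul h2.differentiableAt.hasDerivAt).deriv
      have e2 : deriv (fun t => g t ^ (m + 1) * h t) t = _ := e
      rw [e2]
      simp
      ring
    rw [hev.iteratedDeriv_eq]
    rw [ih m (fun t => ((m : ℝ) + 1) * deriv g t * h t + g t * deriv h t)
      (((analyticAt_const.mul hg.deriv).mul hh).add (hg.mul hh.deriv)) (by omega)]
    simp only [hg0, Nat.add_right_cancel_iff, Nat.factorial_succ]
    split_ifs
    · push_cast; ring
    · rfl

theorem berrut_den_ne (n : ℕ) (θ : Fin n → ℝ) (hθ : StrictMono θ)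
    (hθ0 : ∀ k, 0 ≤ θ k) (hθ2π : ∀ k, θ k < 2 * Real.pi) (l k : Fin n) (h : k ≠ l) :
    Real.sin ((θ l - θ k) / 2) ≠ 0 := by
  have := hθ0 k
  have := hθ0 l
  have := hθ2π k
  have := hθ2π l
  have hne : θ k ≠ θ l := fun e => h (hθ.injective e)
  rcases lt_or_gt_of_ne hne with h1 | h1
  · exact (Real.sin_pos_of_pos_of_lt_pi (by linarith) (by linarith)).ne'
  · exact (Real.sin_neg_of_neg_of_neg_pi_lt (by linarith) (by linarith)).ne

theorem berrut_num_zero (n : ℕ) (θ : Fin n → ℝ) (i l : Fin n) (h : i ≠ l) :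
    (-1 : ℝ) ^ (i : ℕ) * Real.cos ((θ l - θ i) / 2) *
      ∏ k ∈ Finset.univ.erase i, Real.sin ((θ l - θ k) / 2) = 0 := by
  rw [Finset.prod_eq_zero (i := l) (by simp [h.symm]) (by simp), mul_zero]

theorem berrut_den (n : ℕ) (θ : Fin n → ℝ) (l : Fin n) :
    (∑ j : Fin n, (-1 : ℝ) ^ (j : ℕ) * Real.cos ((θ l - θ j) / 2) *
      ∏ k ∈ Finset.univ.erase j, Real.sin ((θ l - θ k) / 2)) =
    (-1 : ℝ) ^ (l : ℕ) * Real.cos ((θ l - θ l) / 2) *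
      ∏ k ∈ Finset.univ.erase l, Real.sin ((θ l - θ k) / 2) :=
  Finset.sum_eq_single l (fun b _ hb => berrut_num_zero n θ b l hb) (by simp)

theorem berrut_self_ne (n : ℕ) (θ : Fin n → ℝ) (hθ : StrictMono θ)
    (hθ0 : ∀ k, 0 ≤ θ k) (hθ2π : ∀ k, θ k < 2 * Real.pi) (l : Fin n) :
    (-1 : ℝ) ^ (l : ℕ) * Real.cos ((θ l - θ l) / 2) *
      ∏ k ∈ Finset.univ.erase l, Real.sin ((θ l - θ k) / 2) ≠ 0 := by
  refine mul_ne_zero (by simp) (Finset.prod_ne_zero_iff.2 fun k hk => ?_)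
  exact berrut_den_ne n θ hθ hθ0 hθ2π l k (Finset.ne_of_mem_erase hk)

theorem berrut_analytic (n : ℕ) (θ : Fin n → ℝ) (hθ : StrictMono θ)
    (hθ0 : ∀ k, 0 ≤ θ k) (hθ2π : ∀ k, θ k < 2 * Real.pi) (i l : Fin n) :
    AnalyticAt ℝ (berrutBasisEven n θ i) (θ l) := by
  have hs : ∀ k, AnalyticAt ℝ (fun t => Real.sin ((t - θ k) / 2)) (θ l) := fun k => by fun_prop
  have hc : ∀ k, AnalyticAt ℝ (fun t => Real.cos ((t - θ k) / 2)) (θ l) := fun k => by fun_prop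
  have hN : ∀ j : Fin n, AnalyticAt ℝ (fun t => (-1 : ℝ) ^ (j : ℕ) * Real.cos ((t - θ j) / 2) *
      ∏ k ∈ Finset.univ.erase j, Real.sin ((t - θ k) / 2)) (θ l) := fun j =>
    (analyticAt_const.mul (hc j)).mul (Finset.analyticAt_fun_prod _ fun k _ => hs k)
  refine (hN i).div (Finset.analyticAt_fun_sum _ fun j _ => hN j) ?_
  rw [berrut_den]
  exact berrut_self_ne n θ hθ hθ0 hθ2π l

theorem berrut_val (n : ℕ) (θ : Fin n → ℝ) (hθ : StrictMono θ)
    (hθ0 : ∀ k, 0 ≤ θ k) (hθ2π : ∀ k, θ k < 2 * Real.pi) (i l : Fin n) :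
    berrutBasisEven n θ i (θ l) = if i = l then 1 else 0 := by
  unfold berrutBasisEven
  rw [berrut_den]
  split_ifs with h
  · subst h
    exact div_self (berrut_self_ne n θ hθ hθ0 hθ2π i)
  · rw [berrut_num_zero n θ i l h, zero_div]

/-- for even `n`, the trigonometric Hermite basis satisfies
`b_{i,j}^{(k)}(θ_ℓ) = 0` for `k < j` and `b_{i,j}^{(j)}(θ_ℓ) = δ_{iℓ}`. -/
theorem trigHermiteBasisEven_property
    (n : ℕ) (hn : 2 ≤ n) (heven : Even n)
    (θ : Fin n → ℝ) (hθ : StrictMono θ)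
    (hθ0 : ∀ k, 0 ≤ θ k) (hθ2π : ∀ k, θ k < 2 * Real.pi) :
    ∀ (i ℓ : Fin n) (j k : ℕ),
      (k < j → iteratedDeriv k (trigHermiteBasisEven n θ i j) (θ ℓ) = 0) ∧
      iteratedDeriv j (trigHermiteBasisEven n θ i j) (θ ℓ)
        = if i = ℓ then 1 else 0 := by
  intro i l j k
  have hb := berrut_analytic n θ hθ hθ0 hθ2π i l
  have hv := berrut_val n θ hθ hθ0 hθ2π i l
  have hs : AnalyticAt ℝ (fun t => Real.sin ((t - θ i) / 2)) (θ l) := by fun_prop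
  have hg : AnalyticAt ℝ (fun t => Real.sin ((t - θ i) / 2) * berrutBasisEven n θ i t) (θ l) :=
    hs.mul hb
  have hg0 : Real.sin ((θ l - θ i) / 2) * berrutBasisEven n θ i (θ l) = 0 := by
    rw [hv]
    split_ifs with h
    · subst h; simp
    · simp
  have hf : trigHermiteBasisEven n θ i j = fun t =>
      (Real.sin ((t - θ i) / 2) * berrutBasisEven n θ i t) ^ j *
        (((2 : ℝ) ^ j / (Nat.factorial j : ℝ)) * berrutBasisEven n θ i t) := by
    funext t
    unfold trigHermiteBasisEven
    ring
  have key := fun k hk => iterDeriv_pow_mul_aux (θ l) _ hg hg0 k j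
    (fun t => ((2 : ℝ) ^ j / (Nat.factorial j : ℝ)) * berrutBasisEven n θ i t)
    (analyticAt_const.mul hb) hk
  rw [hf]
  refine ⟨fun hk => ?_, ?_⟩
  · rw [key k hk.le, if_neg hk.ne]
  · rw [key j le_rfl, if_pos rfl, hv]
    split_ifs with h
    · subst h
      have h1 : HasDerivAt (fun t => Real.sin ((t - θ i) / 2)) (1 / 2) (θ i) := by
        have := (((hasDerivAt_id (θ i)).sub_const (θ i)).div_const 2).sin
        simpa using this
      have h2 : deriv (fun t => Real.sin ((t - θ i) / 2) * berrutBasisEven n θ i t) (θ i)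
          = 1 / 2 := by
        have e : deriv (fun t => Real.sin ((t - θ i) / 2) * berrutBasisEven n θ i t) (θ i) = _ :=
          (h1.mul hb.differentiableAt.hasDerivAt).deriv
        rw [e, hv]
        simp
      rw [h2]
      have : (Nat.factorial j : ℝ) ≠ 0 := by positivity
      field_simp
      rw [← mul_pow]
      norm_num
    · simp
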